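/- arXiv:2201.02345 — 2 statements merged into one kernel-verified Lean document; each statement's English description precedes it below -/
import Mathlib

section
/- Every automorphism of the left-ideal relation digraph of M_n(F_q) preserves rank: if Ψ is a bijection of M_n(F_q) such that for all X, Y, [X] ⊊ [Y] if and only if [Ψ(X)] ⊊ [Ψ(Y)], then rank(Ψ(X)) = rank(X) for every X ∈ M_n(F_q). -/
/-- The left ideal of `M_n(F)` generated by `X`: the set of all `C * X`. -/
def leftIdeal {n : ℕ} {F : Type*} [Field F]
    (X : Matrix (Fin n) (Fin n) F) : Set (Matrix (Fin n) (Fin n) F) :=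
  {A | ∃ C : Matrix (Fin n) (Fin n) F, A = C * X}

theorem aux_sub_iff {n : ℕ} {F : Type*} [Field F] (X Y : Matrix (Fin n) (Fin n) F) :
    leftIdeal X ⊆ leftIdeal Y ↔
      LinearMap.range X.vecMulLinear ≤ LinearMap.range Y.vecMulLinear := by
  constructor
  · intro h
    obtain ⟨C, hC⟩ := h ⟨1, (one_mul X).symm⟩
    rintro _ ⟨v, rfl⟩
    refine ⟨Matrix.vecMul v C, ?_⟩
    simp only [Matrix.vecMulLinear_apply]
    rw [Matrix.vecMul_vecMul, ← hC]
  · intro h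
    have h1 : ∀ i, ∃ w, Matrix.vecMul w Y = X i := by
      intro i
      have : X i ∈ LinearMap.range X.vecMulLinear := by
        refine ⟨Pi.single i 1, ?_⟩
        simp only [Matrix.vecMulLinear_apply]
        rw [Matrix.single_one_vecMul]
        rfl
      obtain ⟨w, hw⟩ := h this
      exact ⟨w, hw⟩
    choose w hw using h1
    have hX : X = Matrix.of w * Y := by
      ext i j
      rw [← hw i]
      rfl
    rintro _ ⟨C, rfl⟩
    exact ⟨C * Matrix.of w, by rw [Matrix.mul_assoc, ← hX]⟩

theorem aux_ssub_iff {n : ℕ} {F : Type*} [Field F] (X Y : Matrix (Fin n) (Fin n) F) :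
    leftIdeal X ⊂ leftIdeal Y ↔
      LinearMap.range X.vecMulLinear < LinearMap.range Y.vecMulLinear := by
  rw [lt_iff_le_not_ge, aux_sub_iff, aux_sub_iff, ← lt_iff_le_not_ge]

theorem aux_rank {n : ℕ} {F : Type*} [Field F] (X : Matrix (Fin n) (Fin n) F) :
    X.rank = Module.finrank F (LinearMap.range X.vecMulLinear) := by
  rw [Matrix.rank_eq_finrank_span_row, range_vecMulLinear]

theorem aux_exists {n : ℕ} {F : Type*} [Field F] (Y : Matrix (Fin n) (Fin n) F) (r : ℕ)
    (hr : Y.rank = r + 1) :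
    ∃ X : Matrix (Fin n) (Fin n) F, leftIdeal X ⊂ leftIdeal Y ∧ X.rank = r := by
  rw [aux_rank] at hr
  obtain ⟨v, hv⟩ := exists_linearIndependent_of_le_finrank (R := F)
    (M := LinearMap.range Y.vecMulLinear) (n := r) (by omega)
  have hv' := hv.map' (LinearMap.range Y.vecMulLinear).subtype (Submodule.ker_subtype _)
  set u := (LinearMap.range Y.vecMulLinear).subtype ∘ v with hu
  have hf := finrank_span_eq_card hv'
  rw [Fintype.card_fin] at hf
  set W := Submodule.span F (Set.range u) with hW
  obtain ⟨g, hg⟩ := LinearMap.exists_leftInverse_of_injective W.subtype (Submodule.ker_subtype _)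
  have hXW : ∃ X : Matrix (Fin n) (Fin n) F, LinearMap.range X.vecMulLinear = W := by
    refine ⟨(LinearMap.toMatrix' (W.subtype ∘ₗ g)).transpose, ?_⟩
    rw [Matrix.vecMulLinear_transpose, ← Matrix.toLin'_apply', Matrix.toLin'_toMatrix',
      LinearMap.range_comp_of_range_eq_top, Submodule.range_subtype]
    rw [LinearMap.range_eq_top]
    intro w
    exact ⟨w, LinearMap.congr_fun hg w⟩
  obtain ⟨X, hX⟩ := hXW
  refine ⟨X, ?_, by rw [aux_rank, hX, hf]⟩
  rw [aux_ssub_iff, hX]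
  refine lt_of_le_of_ne ?_ ?_
  · rw [hW, Submodule.span_le]
    rintro _ ⟨i, rfl⟩
    exact (v i).2
  · intro h
    rw [h] at hf
    omega

theorem aux_le {n : ℕ} {F : Type*} [Field F]
    (Ψ : Matrix (Fin n) (Fin n) F → Matrix (Fin n) (Fin n) F)
    (hedge : ∀ X Y : Matrix (Fin n) (Fin n) F,
      leftIdeal X ⊂ leftIdeal Y → leftIdeal (Ψ X) ⊂ leftIdeal (Ψ Y)) (r : ℕ) :
    ∀ X : Matrix (Fin n) (Fin n) F, X.rank = r → r ≤ (Ψ X).rank := by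
  induction r with
  | zero => intro X _; exact Nat.zero_le _
  | succ r ih =>
    intro Y hY
    obtain ⟨X, hXY, hX⟩ := aux_exists Y r hY
    have h1 := ih X hX
    have h2 := hedge X Y hXY
    rw [aux_ssub_iff] at h2
    have h3 := Submodule.finrank_lt_finrank_of_lt h2
    rw [← aux_rank, ← aux_rank] at h3
    omega

/-- Every automorphism of the left-ideal relation digraph of `M_n(F_q)`
preserves rank. -/
theorem stmt_9 {n : ℕ} {F : Type*} [Field F] [Fintype F]
    (Ψ : Matrix (Fin n) (Fin n) F → Matrix (Fin n) (Fin n) F)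
    (hbij : Function.Bijective Ψ)
    (hedge : ∀ X Y : Matrix (Fin n) (Fin n) F,
      leftIdeal X ⊂ leftIdeal Y ↔ leftIdeal (Ψ X) ⊂ leftIdeal (Ψ Y))
    (X : Matrix (Fin n) (Fin n) F) :
    (Ψ X).rank = X.rank := by
  obtain ⟨Φ, hl, hr⟩ := Function.bijective_iff_has_inverse.mp hbij
  apply le_antisymm
  · have h := aux_le Φ (fun A B hAB => by
      rw [hedge, hr, hr]; exact hAB) _ (Ψ X) rfl
    rwa [hl] at h
  · exact aux_le Ψ (fun A B => (hedge A B).1) _ X rfl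
end

section
/- Let n ≥ 3 and let Ψ be an automorphism of the left-ideal relation digraph of M_n(F_q). If [Ψ(E_{e_k})] = [E_{e_k}] for every k with 1 ≤ k ≤ i, then [Ψ(E_i)] = [E_i]. -/
/-- `Ee k` is the matrix whose first row is the `k`-th standard basis vector of
`F^n` and whose other rows are zero. -/
def Ee {n : ℕ} (F : Type*) [Field F] (k : Fin n) : Matrix (Fin n) (Fin n) F :=
  Matrix.of fun i j => if (i : ℕ) = 0 ∧ j = k then 1 else 0

/-- `Er r` is the diagonal matrix whose first `r` diagonal entries are `1` and
whose remaining entries are `0`. -/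
def Er (n : ℕ) (F : Type*) [Field F] (r : ℕ) : Matrix (Fin n) (Fin n) F :=
  Matrix.diagonal (fun i => if (i : ℕ) < r then 1 else 0)

theorem leftIdeal_le_of_mem {n : ℕ} {F : Type*} [Field F]
    {X Y : Matrix (Fin n) (Fin n) F} (h : X ∈ leftIdeal Y) : leftIdeal X ⊆ leftIdeal Y := by
  obtain ⟨C, rfl⟩ := h
  rintro _ ⟨D, rfl⟩
  exact ⟨D * C, by rw [Matrix.mul_assoc]⟩

theorem self_mem_leftIdeal {n : ℕ} {F : Type*} [Field F]
    (X : Matrix (Fin n) (Fin n) F) : X ∈ leftIdeal X := ⟨1, by simp⟩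

theorem Ee_mem_Er {n : ℕ} {F : Type*} [Field F] (k : Fin n) (i : ℕ) (hk : (k : ℕ) < i) :
    Ee F k ∈ leftIdeal (Er n F i) := by
  refine ⟨Ee F k, ?_⟩
  ext a b
  simp only [Ee, Er, Matrix.mul_diagonal, Matrix.of_apply]
  by_cases hb : b = k
  · subst hb; simp [hk]
  · simp [hb]

theorem Ee_notMem {n : ℕ} {F : Type*} [Field F] (k l : Fin n) (h : l ≠ k) :
    Ee F l ∉ leftIdeal (Ee F k) := by
  rintro ⟨C, hC⟩
  have hn : 0 < n := Nat.lt_of_le_of_lt (Nat.zero_le _) k.2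
  have := congrFun (congrFun hC ⟨0, hn⟩) l
  simp [Ee, Matrix.mul_apply, h] at this

theorem Er_mem {n : ℕ} {F : Type*} [Field F] (i : ℕ) (Y : Matrix (Fin n) (Fin n) F)
    (h : ∀ k : Fin n, (k : ℕ) < i → Ee F k ∈ leftIdeal Y) : Er n F i ∈ leftIdeal Y := by
  have h' : ∀ k : Fin n, ∃ C : Matrix (Fin n) (Fin n) F, (k : ℕ) < i → Ee F k = C * Y := by
    intro k
    by_cases hk : (k : ℕ) < i
    · obtain ⟨C, hC⟩ := h k hk
      exact ⟨C, fun _ => hC⟩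
    · exact ⟨0, fun h => absurd h hk⟩
  choose C hC using h'
  refine ⟨Matrix.of fun a b => if (a : ℕ) < i then C a ⟨0, a.pos⟩ b else 0, ?_⟩
  ext a b
  by_cases ha : (a : ℕ) < i
  · have := congrFun (congrFun (hC a ha) ⟨0, a.pos⟩) b
    simp only [Matrix.mul_apply, Matrix.of_apply, Er, Matrix.diagonal_apply, ha, if_true] at this ⊢
    rw [← this]
    simp [Ee, eq_comm]
  · simp [Matrix.mul_apply, Er, Matrix.diagonal_apply, ha]

/-- If an automorphism `Ψ` of the left-ideal relation digraph of `M_n(F_q)`,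
`n ≥ 3`, fixes the ideals `[E_{e_k}]` for `1 ≤ k ≤ i`, then it fixes `[E_i]`. -/
theorem stmt_13 {n : ℕ} (hn : 3 ≤ n) {F : Type*} [Field F] [Fintype F]
    (Ψ : Matrix (Fin n) (Fin n) F → Matrix (Fin n) (Fin n) F)
    (hbij : Function.Bijective Ψ)
    (hedge : ∀ X Y : Matrix (Fin n) (Fin n) F,
      leftIdeal X ⊂ leftIdeal Y ↔ leftIdeal (Ψ X) ⊂ leftIdeal (Ψ Y))
    (i : ℕ) (hi1 : 1 ≤ i) (hin : i ≤ n)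
    (hfix : ∀ k : Fin n, (k : ℕ) < i → leftIdeal (Ψ (Ee F k)) = leftIdeal (Ee F k)) :
    leftIdeal (Ψ (Er n F i)) = leftIdeal (Er n F i) := by
  rcases Nat.lt_or_ge i 2 with h2 | h2
  · have hi : i = 1 := by omega
    subst hi
    have h0 : Er n F 1 = Ee F (⟨0, by omega⟩ : Fin n) := by
      ext a b
      simp only [Er, Ee, Matrix.diagonal_apply, Matrix.of_apply, Fin.ext_iff]
      split_ifs <;> first | rfl | omega
    rw [h0]
    exact hfix _ (by simp)
  · have hmem : Er n F i ∈ leftIdeal (Ψ (Er n F i)) := by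
      apply Er_mem
      intro k hk
      have hss : leftIdeal (Ee F k) ⊂ leftIdeal (Er n F i) := by
        refine ⟨leftIdeal_le_of_mem (Ee_mem_Er k i hk), fun hle => ?_⟩
        obtain ⟨l, hl, hlk⟩ : ∃ l : Fin n, (l : ℕ) < i ∧ l ≠ k := by
          by_cases hk0 : (k : ℕ) = 0
          · exact ⟨⟨1, by omega⟩, by simp; omega, by simp [Fin.ext_iff]; omega⟩
          · exact ⟨⟨0, by omega⟩, by simp; omega, by simp [Fin.ext_iff]; omega⟩
        exact Ee_notMem k l hlk (hle (Ee_mem_Er l i hl))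
      have := (hedge _ _).1 hss
      rw [hfix k hk] at this
      exact this.1 (self_mem_leftIdeal _)
    by_contra hne
    have hlt : leftIdeal (Er n F i) ⊂ leftIdeal (Ψ (Er n F i)) :=
      (leftIdeal_le_of_mem hmem).ssubset_of_ne (fun h => hne h.symm)
    have hstep : ∀ m : ℕ, leftIdeal (Ψ^[m] (Er n F i)) ⊂ leftIdeal (Ψ^[m+1] (Er n F i)) := by
      intro m
      induction m with
      | zero => simpa using hlt
      | succ m ih =>
        rw [Function.iterate_succ_apply' Ψ (m+1), Function.iterate_succ_apply' Ψ m] at *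
        exact (hedge _ _).1 ih
    have hmono : StrictMono fun m : ℕ => leftIdeal (Ψ^[m] (Er n F i)) :=
      strictMono_nat_of_lt_succ hstep
    exact not_injective_infinite_finite _ hmono.injective
end
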